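/- Let V = V₁ ⊕ V₂ be a direct sum decomposition with g(u₁, u₂) = 0 for all u₁ ∈ V₁, u₂ ∈ V₂, and suppose the restriction g₁ of g to V₁ is nondegenerate. Let π : V → V₁ be the projection along V₂ and ι : V₁ → V the inclusion. If 𝔥 is a Berger subalgebra of so(g₁) (a Lie algebra of g₁-skew-symmetric endomorphisms of V₁), then its image {ι ∘ A ∘ π : A ∈ 𝔥} under the standard embedding is a Berger subalgebra of so(g); in particular each ι ∘ A ∘ π is g-skew-symmetric. -/

import Mathlib

/-- A formal curvature tensor on a real vector space `W`: an alternating bilinear map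
`R : W × W → End(W)` satisfying the Bianchi identity. -/
def IsFormalCurvature {W : Type*} [AddCommGroup W] [Module ℝ W]
    (R : W → W → Module.End ℝ W) : Prop :=
  (∀ u u' v : W, R (u + u') v = R u v + R u' v) ∧
  (∀ (c : ℝ) (u v : W), R (c • u) v = c • R u v) ∧
  (∀ u v v' : W, R u (v + v') = R u v + R u v') ∧
  (∀ (c : ℝ) (u v : W), R u (c • v) = c • R u v) ∧
  (∀ u : W, R u u = 0) ∧
  (∀ u v w : W, R u v w + R v w u + R w u v = 0)

/-- A set `h ⊆ End(W)` (e.g. a Lie subalgebra) is a Berger algebra if it is spanned,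
as a vector space, by the values of all formal curvature tensors whose values lie
in `h`. -/
def IsBerger {W : Type*} [AddCommGroup W] [Module ℝ W]
    (h : Set (Module.End ℝ W)) : Prop :=
  (Submodule.span ℝ {A : Module.End ℝ W |
      ∃ R, IsFormalCurvature R ∧ (∀ u v, R u v ∈ h) ∧ ∃ u v, R u v = A} :
    Set (Module.End ℝ W)) = h

/-!
A curvature tensor `R` on `W` is transported along `ι : W → V` and `π : V → W` to
`(x, y) ↦ ι ∘ R(πx, πy) ∘ π`; its Bianchi identity at `(x, y, z)` is the image under `ι` of that
of `R` at `(πx, πy, πz)`. When `π` is surjective, every `ι ∘ R(u, v) ∘ π` is a value of the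
transported tensor, so `A ↦ ι ∘ A ∘ π` carries a spanning set of curvature values to curvature
values. Skew-symmetry is preserved because orthogonality of `V₁` and `V₂` says precisely that the
inclusion of `V₁` and the projection onto it are adjoint to each other.
-/

section EndExtension

variable {K V W : Type*} [CommRing K] [AddCommGroup V] [Module K V] [AddCommGroup W] [Module K W]

/-- The linear map `A ↦ ι ∘ A ∘ π` from `End W` to `End V`. For `ι` the inclusion of a direct
summand `W` of `V` and `π` the projection onto it, this is the standard embedding. -/
def endExtension (ι : W →ₗ[K] V) (π : V →ₗ[K] W) : Module.End K W →ₗ[K] Module.End K V :=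
  LinearMap.compRight K ι ∘ₗ LinearMap.lcomp K W π

theorem endExtension_apply (ι : W →ₗ[K] V) (π : V →ₗ[K] W) (A : Module.End K W) :
    endExtension ι π A = ι ∘ₗ A ∘ₗ π :=
  rfl

theorem coe_map_endExtension (ι : W →ₗ[K] V) (π : V →ₗ[K] W)
    (h : Submodule K (Module.End K W)) :
    (h.map (endExtension ι π) : Set (Module.End K V)) = {B | ∃ A ∈ h, B = ι ∘ₗ A ∘ₗ π} := by
  ext B
  simp only [Submodule.map_coe, Set.mem_image, SetLike.mem_coe, Set.mem_ofPred_eq,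
    endExtension_apply, eq_comm]

theorem isSkewAdjoint_endExtension {g : LinearMap.BilinForm K V} {g₁ : LinearMap.BilinForm K W}
    {ι : W →ₗ[K] V} {π : V →ₗ[K] W} (hι : LinearMap.IsAdjointPair g₁ g ι π)
    (hπ : LinearMap.IsAdjointPair g g₁ π ι) {A : Module.End K W} (hA : g₁.IsSkewAdjoint A) :
    g.IsSkewAdjoint (endExtension ι π A) := by
  have hcomp : LinearMap.IsAdjointPair g g (ι ∘ₗ A ∘ₗ π) ((ι ∘ₗ (-A)) ∘ₗ π) :=
    (hπ.comp hA).comp hι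
  intro u v
  simpa [endExtension_apply] using hcomp u v

end EndExtension

section OrthogonalProjection

variable {K V : Type*} [CommRing K] [AddCommGroup V] [Module K V] {V₁ V₂ : Submodule K V}
  {π : V →ₗ[K] V₁}

theorem sub_coe_projection_mem (hcodisj : Codisjoint V₁ V₂) (hπ₁ : ∀ x : V₁, π x = x)
    (hπ₂ : ∀ x ∈ V₂, π x = 0) (v : V) : v - π v ∈ V₂ := by
  obtain ⟨a, b, ha, hb, rfl⟩ := Submodule.codisjoint_iff_exists_add_eq.1 hcodisj v
  have hπa : π a = ⟨a, ha⟩ := hπ₁ ⟨a, ha⟩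
  simpa [hπa, hπ₂ b hb] using hb

theorem isAdjointPair_subtype_projection (g : LinearMap.BilinForm K V)
    (hcodisj : Codisjoint V₁ V₂) (horth : ∀ u₁ ∈ V₁, ∀ u₂ ∈ V₂, g u₁ u₂ = 0)
    (hπ₁ : ∀ x : V₁, π x = x) (hπ₂ : ∀ x ∈ V₂, π x = 0) :
    LinearMap.IsAdjointPair (g.restrict V₁) g V₁.subtype π := by
  intro x v
  have horth_sub : g x (v - π v) = 0 :=
    horth x x.2 _ (sub_coe_projection_mem hcodisj hπ₁ hπ₂ v)
  rwa [map_sub, sub_eq_zero] at horth_sub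

theorem isAdjointPair_projection_subtype (g : LinearMap.BilinForm K V)
    (hcodisj : Codisjoint V₁ V₂) (horth : ∀ u₁ ∈ V₁, ∀ u₂ ∈ V₂, g u₂ u₁ = 0)
    (hπ₁ : ∀ x : V₁, π x = x) (hπ₂ : ∀ x ∈ V₂, π x = 0) :
    LinearMap.IsAdjointPair g (g.restrict V₁) π V₁.subtype :=
  fun v x => (isAdjointPair_subtype_projection g.flip hcodisj horth hπ₁ hπ₂ x v).symm

end OrthogonalProjection

section Berger

variable {V W : Type*} [AddCommGroup V] [Module ℝ V] [AddCommGroup W] [Module ℝ W]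

theorem IsFormalCurvature.endExtension {R : W → W → Module.End ℝ W} (hR : IsFormalCurvature R)
    (ι : W →ₗ[ℝ] V) (π : V →ₗ[ℝ] W) :
    IsFormalCurvature fun x y => endExtension ι π (R (π x) (π y)) := by
  obtain ⟨add_left, smul_left, add_right, smul_right, alternating, bianchi⟩ := hR
  refine ⟨?_, ?_, ?_, ?_, ?_, fun x y z => ?_⟩
  · simp [add_left]
  · simp [smul_left]
  · simp [add_right]
  · simp [smul_right]
  · simp [alternating]
  · simpa [endExtension_apply] using congrArg ι (bianchi (π x) (π y) (π z))

theorem isBerger_coe_iff_le_span {h : Submodule ℝ (Module.End ℝ W)} :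
    IsBerger (h : Set (Module.End ℝ W)) ↔
      h ≤ Submodule.span ℝ {A | ∃ R, IsFormalCurvature R ∧ (∀ u v, R u v ∈ h) ∧
        ∃ u v, R u v = A} := by
  have span_le : Submodule.span ℝ {A | ∃ R, IsFormalCurvature R ∧ (∀ u v, R u v ∈ h) ∧
      ∃ u v, R u v = A} ≤ h := by
    rw [Submodule.span_le]
    rintro _ ⟨R, -, hRh, u, v, rfl⟩
    exact hRh u v
  exact SetLike.coe_set_eq.trans span_le.ge_iff_eq.symm

theorem IsBerger.map_endExtension {h : Submodule ℝ (Module.End ℝ W)}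
    (hh : IsBerger (h : Set (Module.End ℝ W))) (ι : W →ₗ[ℝ] V) {π : V →ₗ[ℝ] W}
    (hπ : Function.Surjective π) :
    IsBerger (h.map (endExtension ι π) : Set (Module.End ℝ V)) := by
  rw [isBerger_coe_iff_le_span] at hh ⊢
  refine (Submodule.map_mono hh).trans ?_
  rw [Submodule.map_span]
  apply Submodule.span_mono
  rintro _ ⟨_, ⟨R, hR, hRh, u, v, rfl⟩, rfl⟩
  obtain ⟨x, rfl⟩ := hπ u
  obtain ⟨y, rfl⟩ := hπ v
  exact ⟨_, hR.endExtension ι π, fun _ _ => Submodule.mem_map_of_mem (hRh _ _), x, y, rfl⟩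

end Berger

theorem stmt14_general {V : Type*} [AddCommGroup V] [Module ℝ V]
    (g : LinearMap.BilinForm ℝ V) (hg : g.IsRefl)
    {V₁ V₂ : Submodule ℝ V} (hcompl : IsCompl V₁ V₂)
    (horth : ∀ u₁ ∈ V₁, ∀ u₂ ∈ V₂, g u₁ u₂ = 0)
    {π : V →ₗ[ℝ] V₁} (hπ₁ : ∀ x : V₁, π (x : V) = x) (hπ₂ : ∀ x ∈ V₂, π x = 0)
    (h : Submodule ℝ (Module.End ℝ V₁))
    (hskew : ∀ A ∈ h, ∀ u v : V₁, g (A u : V) (v : V) = - g (u : V) (A v : V))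
    (hberger : IsBerger (h : Set (Module.End ℝ V₁))) :
    (∀ B ∈ {B : Module.End ℝ V | ∃ A ∈ h, B = V₁.subtype ∘ₗ A ∘ₗ π},
        ∀ u v : V, g (B u) v = - g u (B v)) ∧
    (Submodule.span ℝ
        {B : Module.End ℝ V | ∃ A ∈ h, B = V₁.subtype ∘ₗ A ∘ₗ π} :
        Set (Module.End ℝ V)) =
      {B : Module.End ℝ V | ∃ A ∈ h, B = V₁.subtype ∘ₗ A ∘ₗ π} ∧
    IsBerger {B : Module.End ℝ V | ∃ A ∈ h, B = V₁.subtype ∘ₗ A ∘ₗ π} := by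
  rw [← coe_map_endExtension]
  refine ⟨?_, by rw [Submodule.span_eq], hberger.map_endExtension _ fun x => ⟨x, hπ₁ x⟩⟩
  rintro _ ⟨A, hA, rfl⟩ u v
  have subtype_adjoint := isAdjointPair_subtype_projection g hcompl.codisjoint horth hπ₁ hπ₂
  have projection_adjoint := isAdjointPair_projection_subtype g hcompl.codisjoint
    (fun u₁ hu₁ u₂ hu₂ => hg _ _ (horth u₁ hu₁ u₂ hu₂)) hπ₁ hπ₂
  have A_skew : (g.restrict V₁).IsSkewAdjoint A := fun x y => by
    simpa using hskew A hA x y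
  simpa using isSkewAdjoint_endExtension subtype_adjoint projection_adjoint A_skew u v

/-- Let `V = V₁ ⊕ V₂` with `g(V₁, V₂) = 0` and `g₁ = g|_{V₁}`
nondegenerate, `π : V → V₁` the projection along `V₂`, `ι : V₁ → V` the inclusion.
If `𝔥 ⊆ so(g₁)` is a Berger subalgebra, then its image `{ι ∘ A ∘ π : A ∈ 𝔥}` under the
standard embedding is a Berger subalgebra of `so(g)`; in particular each `ι ∘ A ∘ π`
is `g`-skew-symmetric. -/
theorem stmt14 (V : Type*) [AddCommGroup V] [Module ℝ V] [FiniteDimensional ℝ V]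
    (g : LinearMap.BilinForm ℝ V) (hg_symm : ∀ u v : V, g u v = g v u)
    (hg_nd : g.Nondegenerate)
    (V₁ V₂ : Submodule ℝ V) (hcompl : IsCompl V₁ V₂)
    (horth : ∀ u₁ ∈ V₁, ∀ u₂ ∈ V₂, g u₁ u₂ = 0)
    (hnd₁ : ∀ u : V₁, (∀ v : V₁, g (u : V) (v : V) = 0) → u = 0)
    (π : V →ₗ[ℝ] V₁) (hπ₁ : ∀ x : V₁, π (x : V) = x) (hπ₂ : ∀ x ∈ V₂, π x = 0)
    (h : Submodule ℝ (Module.End ℝ V₁))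
    -- `h` consists of `g₁`-skew-symmetric endomorphisms of `V₁`
    (hskew : ∀ A ∈ h, ∀ u v : V₁, g (A u : V) (v : V) = - g (u : V) (A v : V))
    -- `h` is a Lie subalgebra
    (hlie : ∀ A ∈ h, ∀ B ∈ h, A * B - B * A ∈ h)
    -- `h` is a Berger algebra
    (hberger : IsBerger (h : Set (Module.End ℝ V₁))) :
    (∀ B ∈ {B : Module.End ℝ V | ∃ A ∈ h, B = V₁.subtype ∘ₗ A ∘ₗ π},
        ∀ u v : V, g (B u) v = - g u (B v)) ∧
    (Submodule.span ℝ
        {B : Module.End ℝ V | ∃ A ∈ h, B = V₁.subtype ∘ₗ A ∘ₗ π} :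
        Set (Module.End ℝ V)) =
      {B : Module.End ℝ V | ∃ A ∈ h, B = V₁.subtype ∘ₗ A ∘ₗ π} ∧
    IsBerger {B : Module.End ℝ V | ∃ A ∈ h, B = V₁.subtype ∘ₗ A ∘ₗ π} :=
  stmt14_general g (fun u v huv => (hg_symm v u).trans huv) hcompl horth hπ₁ hπ₂ h hskew hberger
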